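/- Let A = q·J + (p−q)·B be the expected adjacency matrix of a Stochastic Block Model on n = k·s nodes with k ≥ 2 blocks of size s ≥ 1 and p > q ≥ 0, p > 0, and let R be its Autocovariance matrix with walk length t ≥ 1. Then the gap between the (constant) intra-block Autocovariance value R_intra and the (constant) inter-block value R_inter equals R_intra − R_inter = (1/n)·s^{t−1}·((p−q)/d)^t, where d = s·p + (k−1)·s·q; in particular the gap is strictly positive. -/

import Mathlib

open Matrix BigOperators

/-!
Let `E` average a function over all vertices and `F` average it over each block. Both are
idempotent, and `E F = F E = E`, so `E` and `F - E` are orthogonal idempotents. The expected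
adjacency matrix is `d E + s (p - q) (F - E)`, hence the `t`-step walk is `E + μ ^ t (F - E)` with
`μ = s (p - q) / d`. The stationary part `E` is exactly what the autocovariance subtracts, leaving
`R = (μ ^ t / n) (F - E)`. Entries of `E` are constant and those of `F` are `1 / s` inside a block
and `0` across blocks, so the gap is `μ ^ t / (n s)`.
-/

section OrthogonalIdempotents

theorem add_pow_of_mul_eq_zero {S : Type*} [Semiring S] {x y : S} (hxy : x * y = 0)
    (hyx : y * x = 0) {n : ℕ} (hn : n ≠ 0) : (x + y) ^ n = x ^ n + y ^ n := by
  induction n, Nat.one_le_iff_ne_zero.mpr hn using Nat.le_induction with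
  | base => simp only [pow_one]
  | succ m hm ih =>
    have hm0 : m ≠ 0 := Nat.one_le_iff_ne_zero.mp hm
    have hxmy : x ^ m * y = 0 := by rw [← pow_sub_one_mul hm0, mul_assoc, hxy, mul_zero]
    have hymx : y ^ m * x = 0 := by rw [← pow_sub_one_mul hm0, mul_assoc, hyx, mul_zero]
    rw [pow_succ, ih hm0, add_mul, mul_add, mul_add, hxmy, hymx, add_zero, zero_add, ← pow_succ,
      ← pow_succ]

theorem smul_add_smul_pow_of_isIdempotentElem {K S : Type*} [CommSemiring K] [Semiring S]
    [Algebra K S] {e f : S} (he : IsIdempotentElem e) (hf : IsIdempotentElem f) (hef : e * f = 0)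
    (hfe : f * e = 0) (a b : K) {n : ℕ} (hn : n ≠ 0) :
    (a • e + b • f) ^ n = a ^ n • e + b ^ n • f := by
  have hxy : a • e * b • f = 0 := by rw [smul_mul_smul_comm, hef, smul_zero]
  have hyx : b • f * a • e = 0 := by rw [smul_mul_smul_comm, hfe, smul_zero]
  rw [add_pow_of_mul_eq_zero hxy hyx hn, smul_pow, smul_pow, he.pow_eq hn, hf.pow_eq hn]

end OrthogonalIdempotents

section BlockAverage

variable {K V ι κ : Type*} [Field K] [Fintype V] [DecidableEq ι] [DecidableEq κ]

variable (K) in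
/-- The matrix averaging a function on `V` over each fibre (block) of the labelling `b`. -/
def blockAverage (b : V → ι) : Matrix V V K :=
  of fun u v => if b u = b v then ((Finset.card {w | b u = b w} : ℕ) : K)⁻¹ else 0

variable (K V) in
/-- The matrix averaging a function over all of `V`, as the case of a single block. -/
abbrev totalAverage : Matrix V V K :=
  blockAverage K fun _ : V => ()

theorem blockAverage_apply_of_eq {b : V → ι} {u v : V} (huv : b u = b v) :
    blockAverage K b u v = ((Finset.card {w | b u = b w} : ℕ) : K)⁻¹ :=
  if_pos huv

theorem blockAverage_apply_of_ne {b : V → ι} {u v : V} (huv : b u ≠ b v) :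
    blockAverage K b u v = 0 :=
  if_neg huv

theorem totalAverage_apply (u v : V) : totalAverage K V u v = (Fintype.card V : K)⁻¹ := by
  simp [blockAverage]

theorem card_block_ne_zero [CharZero K] (b : V → ι) (u : V) :
    ((Finset.card {w | b u = b w} : ℕ) : K) ≠ 0 :=
  Nat.cast_ne_zero.mpr (Finset.card_ne_zero_of_mem (Finset.mem_filter_univ u |>.mpr rfl))

theorem isSymm_blockAverage (b : V → ι) : (blockAverage K b).IsSymm := by
  ext u v
  by_cases huv : b u = b v <;> simp [blockAverage, huv, Ne.symm]

theorem blockAverage_mulVec_one [CharZero K] (b : V → ι) : blockAverage K b *ᵥ 1 = 1 := by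
  ext u
  simp [blockAverage, mulVec, dotProduct, ← Finset.sum_filter, card_block_ne_zero b u]

theorem blockAverage_mul_of_refines [CharZero K] {b : V → ι} {c : V → κ}
    (hbc : ∀ u v, b u = b v → c u = c v) :
    blockAverage K b * blockAverage K c = blockAverage K c := by
  ext u v
  have row_eq_of_same_block (w : V) : blockAverage K b u w * blockAverage K c w v =
      blockAverage K b u w * blockAverage K c u v := by
    by_cases huw : b u = b w
    · simp [blockAverage, hbc u w huw]
    · simp [blockAverage, huw]
  have row_sum : ∑ w, blockAverage K b u w = 1 := by
    simpa [mulVec, dotProduct] using congrFun (blockAverage_mulVec_one (K := K) b) u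
  rw [mul_apply, Finset.sum_congr rfl fun w _ => row_eq_of_same_block w, ← Finset.sum_mul,
    row_sum, one_mul]

theorem mul_blockAverage_of_refines [CharZero K] {b : V → ι} {c : V → κ}
    (hbc : ∀ u v, b u = b v → c u = c v) :
    blockAverage K c * blockAverage K b = blockAverage K c := by
  simpa only [transpose_mul, (isSymm_blockAverage _).eq] using
    congrArg transpose (blockAverage_mul_of_refines (K := K) hbc)

theorem isIdempotentElem_blockAverage [CharZero K] (b : V → ι) :
    IsIdempotentElem (blockAverage K b) :=
  blockAverage_mul_of_refines fun _ _ => id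

variable [DecidableEq V]

theorem smul_totalAverage_add_smul_sub_pow [CharZero K] (b : V → ι) (x y : K) {t : ℕ}
    (ht : t ≠ 0) :
    (x • totalAverage K V + y • (blockAverage K b - totalAverage K V)) ^ t =
      x ^ t • totalAverage K V + y ^ t • (blockAverage K b - totalAverage K V) := by
  have hE : IsIdempotentElem (totalAverage K V) := isIdempotentElem_blockAverage _
  have hFE : blockAverage K b * totalAverage K V = totalAverage K V :=
    blockAverage_mul_of_refines fun _ _ _ => rfl
  have hEF : totalAverage K V * blockAverage K b = totalAverage K V :=
    mul_blockAverage_of_refines fun _ _ _ => rfl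
  refine smul_add_smul_pow_of_isIdempotentElem hE
    (hE.sub (isIdempotentElem_blockAverage b) hEF hFE) ?_ ?_ x y ht
  · rw [mul_sub, hEF, hE.eq, sub_self]
  · rw [sub_mul, hFE, hE.eq, sub_self]

end BlockAverage

section Autocovariance

variable {K V : Type*} [Field K] [Fintype V] [DecidableEq V]

/-- The autocovariance matrix, at walk length `t`, of the weighted graph with adjacency matrix `A`;
`A *ᵥ 1` is its degree vector. -/
noncomputable def autocovariance (A : Matrix V V K) (t : ℕ) : Matrix V V K :=
  let deg := A *ᵥ 1
  let vol := ∑ v, deg v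
  vol⁻¹ • (diagonal deg * ((diagonal deg)⁻¹ * A) ^ t) - (vol ^ 2)⁻¹ • vecMulVec deg deg

theorem autocovariance_of_regular {A : Matrix V V K} {d : K} (hA : A *ᵥ 1 = fun _ => d) (t : ℕ) :
    autocovariance A t =
      (Fintype.card V * d)⁻¹ • ((d • 1 : Matrix V V K) * ((d • 1 : Matrix V V K)⁻¹ * A) ^ t) -
        ((Fintype.card V * d) ^ 2)⁻¹ • of fun _ _ => d * d := by
  have hvol : ∑ _v : V, d = Fintype.card V * d := by simp
  have hD : diagonal (fun _ : V => d) = d • 1 := (smul_one_eq_diagonal d).symm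
  simp only [autocovariance, hA, hvol, hD]
  rfl

theorem autocovariance_of_regular_of_ne_zero {A : Matrix V V K} {d : K} (hd : d ≠ 0)
    (hA : A *ᵥ 1 = fun _ => d) (t : ℕ) :
    autocovariance A t = (Fintype.card V : K)⁻¹ • ((d⁻¹ • A) ^ t - totalAverage K V) := by
  have hDinv : (d • 1 : Matrix V V K)⁻¹ = d⁻¹ • 1 :=
    inv_eq_left_inv (by simp [smul_smul, hd])
  rw [autocovariance_of_regular hA, hDinv, smul_one_mul, smul_one_mul, smul_smul, smul_sub]
  congr 1
  · congr 1
    field_simp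
  · ext u v
    simp only [Matrix.smul_apply, of_apply, totalAverage_apply, smul_eq_mul]
    field_simp

end Autocovariance

section StochasticBlockModel

variable {K V ι : Type*} [DecidableEq ι]

/-- The expected adjacency matrix of the stochastic block model whose blocks are the fibres of `b`,
with intra-block density `p` and inter-block density `q`. -/
def sbmAdjacency (b : V → ι) (p q : K) : Matrix V V K :=
  of fun u v => if b u = b v then p else q

theorem smul_ones_add_smul_sameBlock_eq_sbmAdjacency [Ring K] (b : V → ι)
    (p q : K) :
    q • (of fun _ _ => (1 : K)) + (p - q) • (of fun u v => if b u = b v then (1 : K) else 0) =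
      sbmAdjacency b p q := by
  ext u v
  by_cases huv : b u = b v <;> simp [sbmAdjacency, huv]

variable [Field K] [CharZero K] [Fintype V] {b : V → ι} {s : ℕ} {p q d : K}

theorem sbmAdjacency_eq_smul_totalAverage_add (hb : ∀ u, Finset.card {w | b u = b w} = s)
    (hd : d = s * p + (Fintype.card V - s) * q) :
    sbmAdjacency b p q =
      d • totalAverage K V + (s * (p - q)) • (blockAverage K b - totalAverage K V) := by
  ext u v
  have hs : (s : K) ≠ 0 := hb u ▸ card_block_ne_zero b u
  have : Nonempty V := ⟨u⟩
  have hn : (Fintype.card V : K) ≠ 0 := Nat.cast_ne_zero.mpr Fintype.card_ne_zero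
  rw [Matrix.add_apply, Matrix.smul_apply, Matrix.smul_apply, Matrix.sub_apply,
    totalAverage_apply, sbmAdjacency, of_apply, smul_eq_mul, smul_eq_mul, hd]
  split_ifs with huv
  · rw [blockAverage_apply_of_eq huv, hb]
    field_simp
    ring
  · rw [blockAverage_apply_of_ne huv]
    field_simp
    ring

theorem sbmAdjacency_mulVec_one (hb : ∀ u, Finset.card {w | b u = b w} = s)
    (hd : d = s * p + (Fintype.card V - s) * q) :
    sbmAdjacency b p q *ᵥ 1 = fun _ => d := by
  rw [sbmAdjacency_eq_smul_totalAverage_add hb hd, add_mulVec, smul_mulVec, smul_mulVec,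
    sub_mulVec, blockAverage_mulVec_one, blockAverage_mulVec_one, sub_self, smul_zero, add_zero]
  ext
  simp

variable [DecidableEq V]

theorem autocovariance_sbmAdjacency (hb : ∀ u, Finset.card {w | b u = b w} = s)
    (hd : d = s * p + (Fintype.card V - s) * q) (hd0 : d ≠ 0) {t : ℕ} (ht : t ≠ 0) :
    autocovariance (sbmAdjacency b p q) t =
      ((s * (p - q) / d) ^ t / Fintype.card V) • (blockAverage K b - totalAverage K V) := by
  have walk : d⁻¹ • sbmAdjacency b p q =
      (1 : K) • totalAverage K V + (s * (p - q) / d) • (blockAverage K b - totalAverage K V) := by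
    rw [sbmAdjacency_eq_smul_totalAverage_add hb hd, smul_add, smul_smul, smul_smul,
      inv_mul_cancel₀ hd0, inv_mul_eq_div]
  rw [autocovariance_of_regular_of_ne_zero hd0 (sbmAdjacency_mulVec_one hb hd), walk,
    smul_totalAverage_add_smul_sub_pow b _ _ ht, one_pow, one_smul, add_sub_cancel_left, smul_smul,
    inv_mul_eq_div]

theorem autocovariance_sbmAdjacency_sub (hb : ∀ u, Finset.card {w | b u = b w} = s)
    (hd : d = s * p + (Fintype.card V - s) * q) (hd0 : d ≠ 0) {t : ℕ} (ht : t ≠ 0)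
    {u v u' v' : V} (huv : b u = b v) (huv' : b u' ≠ b v') :
    autocovariance (sbmAdjacency b p q) t u v - autocovariance (sbmAdjacency b p q) t u' v' =
      1 / Fintype.card V * (s : K) ^ (t - 1) * ((p - q) / d) ^ t := by
  have hs : (s : K) ≠ 0 := hb u ▸ card_block_ne_zero b u
  rw [autocovariance_sbmAdjacency hb hd hd0 ht, Matrix.smul_apply, Matrix.smul_apply, ← smul_sub,
    Matrix.sub_apply, Matrix.sub_apply, totalAverage_apply, totalAverage_apply,
    blockAverage_apply_of_eq huv, blockAverage_apply_of_ne huv', hb, smul_eq_mul,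
    mul_div_assoc, mul_pow, ← pow_sub_one_mul ht (s : K)]
  field_simp
  ring

end StochasticBlockModel

theorem card_filter_fst_eq {α β : Type*} [Fintype α] [DecidableEq α] [Fintype β] (u : α × β) :
    Finset.card {w : α × β | u.1 = w.1} = Fintype.card β := by
  have fibre : ({w : α × β | u.1 = w.1} : Finset (α × β)) = {u.1} ×ˢ Finset.univ := by
    ext w
    simp [Finset.mem_product, eq_comm, -Finset.singleton_product]
  rw [fibre, Finset.card_product, Finset.card_singleton, one_mul, Finset.card_univ]

theorem sbm_autocovariance_gap_general {K V ι : Type*} [Field K] [LinearOrder K]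
    [IsStrictOrderedRing K] [Fintype V] [DecidableEq V] [Nonempty V] [DecidableEq ι] {b : V → ι}
    {s : ℕ} (hb : ∀ u, Finset.card {w | b u = b w} = s) {p q d : K}
    (hd : d = s * p + (Fintype.card V - s) * q) (hd0 : 0 < d) {t : ℕ} (ht : t ≠ 0) :
    (∀ u v u' v' : V, b u = b v → b u' ≠ b v' →
      autocovariance (sbmAdjacency b p q) t u v - autocovariance (sbmAdjacency b p q) t u' v' =
        1 / Fintype.card V * (s : K) ^ (t - 1) * ((p - q) / d) ^ t) ∧
    (q < p → 0 < 1 / (Fintype.card V : K) * (s : K) ^ (t - 1) * ((p - q) / d) ^ t) := by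
  refine ⟨fun _ _ _ _ => autocovariance_sbmAdjacency_sub hb hd hd0.ne' ht, fun hpq => ?_⟩
  have hs : (s : K) ≠ 0 := hb (Classical.arbitrary V) ▸ card_block_ne_zero b _
  have hs0 : (0 : K) < s := (Nat.cast_nonneg s).lt_of_ne' hs
  have hn0 : (0 : K) < Fintype.card V := Nat.cast_pos.mpr Fintype.card_pos
  exact mul_pos (mul_pos (one_div_pos.mpr hn0) (pow_pos hs0 _))
    (pow_pos (div_pos (sub_pos.mpr hpq) hd0) t)

/-- For the expected SBM adjacency matrix and its Autocovariance matrix at walk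
length `t ≥ 1`, the gap between the intra-block value and the inter-block value equals
`(1/n) * s^(t−1) * ((p − q)/d)^t` with `d = s p + (k − 1) s q`; in particular the gap is
strictly positive. -/
theorem sbm_autocovariance_gap (k s : ℕ) (hk : 2 ≤ k) (hs : 1 ≤ s)
    (p q : ℝ) (hq : 0 ≤ q) (hpq : q < p) (hp : 0 < p)
    (J B A : Matrix (Fin k × Fin s) (Fin k × Fin s) ℝ)
    (hJ : J = Matrix.of fun _ _ => (1 : ℝ))
    (hB : B = Matrix.of fun u v => if u.1 = v.1 then (1 : ℝ) else 0)
    (hA : A = q • J + (p - q) • B)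
    (dval : ℝ) (hd : dval = (s : ℝ) * p + ((k : ℝ) - 1) * (s : ℝ) * q)
    (D : Matrix (Fin k × Fin s) (Fin k × Fin s) ℝ) (hD : D = dval • 1)
    (vol : ℝ) (hvol : vol = ((k : ℝ) * (s : ℝ)) * dval)
    (t : ℕ) (ht : 1 ≤ t)
    (R : Matrix (Fin k × Fin s) (Fin k × Fin s) ℝ)
    (hR : R = vol⁻¹ • (D * (D⁻¹ * A) ^ t) -
      (vol ^ 2)⁻¹ • Matrix.of (fun _ _ : Fin k × Fin s => dval * dval)) :
    (∀ u v u' v' : Fin k × Fin s, u.1 = v.1 → u'.1 ≠ v'.1 →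
      R u v - R u' v' =
        (1 / ((k : ℝ) * (s : ℝ))) * (s : ℝ) ^ (t - 1) * ((p - q) / dval) ^ t) ∧
    0 < (1 / ((k : ℝ) * (s : ℝ))) * (s : ℝ) ^ (t - 1) * ((p - q) / dval) ^ t := by
  have hb (u : Fin k × Fin s) : Finset.card {w : Fin k × Fin s | u.1 = w.1} = s :=
    (card_filter_fst_eq u).trans (Fintype.card_fin s)
  have hcard : (Fintype.card (Fin k × Fin s) : ℝ) = k * s := by simp
  have hdeg : dval = s * p + (Fintype.card (Fin k × Fin s) - s) * q := by rw [hd, hcard]; ring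
  have hR_eq : R = autocovariance (sbmAdjacency Prod.fst p q) t := by
    rw [hR, hvol, hD, hA, hJ, hB, smul_ones_add_smul_sameBlock_eq_sbmAdjacency,
      autocovariance_of_regular (sbmAdjacency_mulVec_one hb hdeg), hcard]
  have hd0 : 0 < dval := by
    have hk1 : (0 : ℝ) ≤ k - 1 := sub_nonneg.mpr (by exact_mod_cast one_le_two.trans hk)
    rw [hd]
    positivity
  have : Nonempty (Fin k × Fin s) := ⟨⟨0, by lia⟩, ⟨0, hs⟩⟩
  have gap := sbm_autocovariance_gap_general hb hdeg hd0 (Nat.one_le_iff_ne_zero.mp ht)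
  rw [hcard, ← hR_eq] at gap
  exact ⟨gap.1, gap.2 hpq⟩
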